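/- Let K be a field, R = K[x_1,…,x_n], and let I and J be monomial ideals of R. Suppose that for every subset S ⊆ {1,…,n} such that the monomial prime ideal p = (x_i : i ∈ S) belongs to Ass_R(R/I), one has J(p) ⊆ I(p), where A(p) denotes the ideal of K[x_i : i ∈ S] generated by the image of A under the K-algebra homomorphism sending x_i ↦ x_i for i ∈ S and x_j ↦ 1 for j ∉ S. Then J ⊆ I. -/

import Mathlib

open MvPolynomial

/-- A monomial ideal: an ideal generated by monomials. -/
def IsMonomialIdeal {K : Type*} [Field K] {n : ℕ} (I : Ideal (MvPolynomial (Fin n) K)) : Prop :=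
  ∃ S : Set (Fin n →₀ ℕ), I = Ideal.span ((fun d => monomial d (1 : K)) '' S)

/-- The monomial localization map `π_S : K[x_1,…,x_n] → K[x_i : i ∈ S]` sending
`x_i ↦ x_i` for `i ∈ S` and `x_j ↦ 1` for `j ∉ S`. -/
noncomputable def monLocMap (K : Type*) [Field K] {n : ℕ} (S : Finset (Fin n)) :
    MvPolynomial (Fin n) K →ₐ[K] MvPolynomial {i // i ∈ S} K :=
  aeval fun i => if h : i ∈ S then X ⟨i, h⟩ else 1

section MonomialLocalization

variable {K : Type*} [Field K] {σ : Type*}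

/-- The ideal generated by a set of variables is prime. -/
theorem isPrime_span_X_image (S : Set σ) :
    (Ideal.span (X '' S : Set (MvPolynomial σ K))).IsPrime := by
  classical
  set P := Ideal.span (X '' S : Set (MvPolynomial σ K))
  let φ : MvPolynomial σ K →ₐ[K] MvPolynomial σ K := aeval fun i => if i ∈ S then 0 else X i
  have hφ : (Ideal.Quotient.mkₐ K P).comp φ = Ideal.Quotient.mkₐ K P := by
    ext i
    by_cases hi : i ∈ S
    · have : (Ideal.Quotient.mk P) (X i) = 0 :=
        Ideal.Quotient.eq_zero_iff_mem.2 (Ideal.subset_span ⟨i, hi, rfl⟩)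
      simp [φ, hi, this]
    · simp [φ, hi]
  have hker : P = RingHom.ker φ := by
    refine le_antisymm (Ideal.span_le.2 ?_) fun f hf => ?_
    · rintro _ ⟨i, hi, rfl⟩
      simp [φ, hi]
    · have := DFunLike.congr_fun hφ f
      rw [AlgHom.comp_apply, (RingHom.mem_ker).1 hf, map_zero] at this
      exact Ideal.Quotient.eq_zero_iff_mem.1 this.symm
  rw [hker]
  exact RingHom.ker_isPrime _

/-- The monomial localization map restricts exponents to `S`. -/
theorem monLocMap_monomial {n : ℕ} (S : Finset (Fin n)) (d : Fin n →₀ ℕ) :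
    monLocMap K S (monomial d 1) = monomial (d.subtypeDomain (· ∈ S)) 1 := by
  rw [monLocMap, aeval_monomial, map_one, one_mul, monomial_eq, map_one, one_mul,
    Finsupp.prod_fintype _ _ (by simp), Finsupp.prod_fintype _ _ (by simp),
    ← Finset.prod_subset (Finset.subset_univ S) (by intro i _ hi; simp [hi]),
    ← Finset.prod_coe_sort]
  exact Finset.prod_congr rfl fun i _ => by simp

/-- A monomial lies in the ideal generated by monomials iff it is divisible by a generator. -/
theorem monomial_mem_span_monomial_image {A : Set (σ →₀ ℕ)} {d : σ →₀ ℕ} :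
    monomial d (1 : K) ∈ Ideal.span ((fun s => monomial s (1 : K)) '' A) ↔ ∃ a ∈ A, a ≤ d := by
  classical
  simp [mem_ideal_span_monomial_image, support_monomial]

/-- If `f * x^e` lies in a monomial ideal, so does `x^(m + e)` for every monomial `x^m` of `f`. -/
theorem monomial_mem_of_mul_monomial_mem {A : Set (σ →₀ ℕ)} {f : MvPolynomial σ K}
    {e m : σ →₀ ℕ}
    (hf : f * monomial e 1 ∈ Ideal.span ((fun s => monomial s (1 : K)) '' A))
    (hm : m ∈ f.support) :
    monomial (m + e) (1 : K) ∈ Ideal.span ((fun s => monomial s (1 : K)) '' A) := by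
  rw [monomial_mem_span_monomial_image]
  refine mem_ideal_span_monomial_image.1 hf _ ?_
  rwa [mem_support_iff, coeff_mul_monomial, mul_one, ← mem_support_iff]

/-- Every monomial outside a monomial ideal `I` has a multiple `x^e` such that `(I : x^e)` is
generated by a set of variables. -/
theorem exists_colon_monomial_eq_span_X [Finite σ] (A : Set (σ →₀ ℕ)) {d : σ →₀ ℕ}
    (hd : monomial d (1 : K) ∉ Ideal.span ((fun s => monomial s (1 : K)) '' A)) :
    ∃ e, d ≤ e ∧ ∃ S : Set σ,
      (Ideal.span ((fun s => monomial s (1 : K)) '' A)).colon {monomial e (1 : K)} =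
        Ideal.span (X '' S : Set (MvPolynomial σ K)) := by
  set I := Ideal.span ((fun s => monomial s (1 : K)) '' A)
  let c : (σ →₀ ℕ) → Ideal (MvPolynomial σ K) := fun e => I.colon {monomial e (1 : K)}
  have hc (e f) : f ∈ c e ↔ f * monomial e 1 ∈ I := by
    simp [c, Submodule.mem_colon_singleton]
  obtain ⟨_, ⟨e, ⟨hde, he⟩, rfl⟩, hmax⟩ := set_has_maximal_iff_noetherian.2
    (inferInstance : IsNoetherianRing (MvPolynomial σ K))
    (c '' {e | d ≤ e ∧ monomial e (1 : K) ∉ I}) ⟨_, d, ⟨le_rfl, hd⟩, rfl⟩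
  have hmono (e w) : c e ≤ c (w + e) := by
    intro f hf
    rw [hc] at hf ⊢
    have := I.mul_mem_left (monomial w 1) hf
    rwa [mul_left_comm, monomial_mul, one_mul] at this
  have hstable (w) (hw : monomial (w + e) (1 : K) ∉ I) : c (w + e) = c e := by
    by_contra hne
    exact hmax _ ⟨w + e, ⟨hde.trans le_add_self, hw⟩, rfl⟩
      (lt_of_le_of_ne (hmono e w) (Ne.symm hne))
  let S : Set σ := {i | X i ∈ c e}
  have hout (w : σ →₀ ℕ) : (∀ i ∈ S, w i = 0) → monomial (w + e) (1 : K) ∉ I := by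
    induction hN : w.degree generalizing w with
    | zero =>
      rw [(Finsupp.degree_eq_zero_iff w).1 hN, zero_add]
      exact fun _ => he
    | succ N ih =>
      intro hw
      obtain ⟨i, hi⟩ : ∃ i, w i ≠ 0 := by
        by_contra! h0
        simp [show w = 0 from Finsupp.ext h0] at hN
      obtain ⟨v, rfl⟩ : ∃ v, w = Finsupp.single i 1 + v :=
        le_iff_exists_add.1 (Finsupp.single_le_iff.2 (Nat.one_le_iff_ne_zero.2 hi))
      have hv : monomial (v + e) (1 : K) ∉ I := by
        refine ih v ?_ fun j hj => ?_
        · simp only [map_add, Finsupp.degree_single] at hN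
          omega
        · have := hw j hj
          simp only [Finsupp.add_apply] at this
          omega
      have hiS : i ∉ S := fun hiS => hi (hw i hiS)
      rwa [show (i ∈ S) = (X i ∈ c e) from rfl, ← hstable v hv, hc, X, monomial_mul, one_mul,
        ← add_assoc] at hiS
  refine ⟨e, hde, S, le_antisymm (fun f hf => ?_) (Ideal.span_le.2 ?_)⟩
  · rw [mem_ideal_span_X_image]
    intro m hm
    by_contra! hS
    exact hout m hS (monomial_mem_of_mul_monomial_mem ((hc e f).1 hf) hm)
  · rintro _ ⟨i, hi, rfl⟩
    exact hi

end MonomialLocalization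

theorem stmt_8 {K : Type*} [Field K] {n : ℕ} (I J : Ideal (MvPolynomial (Fin n) K))
    (hI : IsMonomialIdeal I) (hJ : IsMonomialIdeal J)
    (h : ∀ S : Finset (Fin n),
      Ideal.span ((fun i => (X i : MvPolynomial (Fin n) K)) '' ↑S) ∈
        associatedPrimes (MvPolynomial (Fin n) K) (MvPolynomial (Fin n) K ⧸ I) →
      Ideal.map (monLocMap K S) J ≤ Ideal.map (monLocMap K S) I) :
    J ≤ I := by
  classical
  obtain ⟨A, rfl⟩ := hI
  obtain ⟨B, rfl⟩ := hJ
  rw [Ideal.span_le]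
  rintro _ ⟨d, hdB, rfl⟩
  by_contra hd
  obtain ⟨e, hde, T, hT⟩ := exists_colon_monomial_eq_span_X A hd
  set I := Ideal.span ((fun s => monomial s (1 : K)) '' A) with hI
  have hc (f) : f * monomial e 1 ∈ I ↔ f ∈ Ideal.span (X '' T : Set (MvPolynomial (Fin n) K)) := by
    rw [← hT, Submodule.mem_colon_singleton, smul_eq_mul]
  have hass : Ideal.span ((fun i => (X i : MvPolynomial (Fin n) K)) '' ↑T.toFinset) ∈
      associatedPrimes (MvPolynomial (Fin n) K) (MvPolynomial (Fin n) K ⧸ I) := by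
    rw [AssociatedPrimes.mem_iff, isAssociatedPrime_iff, Set.coe_toFinset]
    refine ⟨isPrime_span_X_image T, Ideal.Quotient.mk I (monomial e 1), ?_⟩
    ext f
    rw [Submodule.mem_colon_singleton, Submodule.mem_bot]
    exact (hc f).symm.trans Ideal.Quotient.eq_zero_iff_mem.symm
  have hloc := h _ hass (Ideal.mem_map_of_mem _ (Ideal.subset_span ⟨d, hdB, rfl⟩))
  simp only [hI, Ideal.map_span, Set.image_image, monLocMap_monomial] at hloc
  rw [← Set.image_image (fun s => monomial s (1 : K)), monomial_mem_span_monomial_image] at hloc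
  obtain ⟨_, ⟨a, ha, rfl⟩, hle⟩ := hloc
  let w := a.filter (· ∉ T)
  have hw : monomial w (1 : K) * monomial e 1 ∈ I := by
    rw [monomial_mul, one_mul, hI, monomial_mem_span_monomial_image]
    refine ⟨a, ha, fun i => ?_⟩
    by_cases hi : i ∈ T
    · have := hle ⟨i, by simpa using hi⟩
      exact (this.trans (hde i)).trans (by simp)
    · simp [w, hi]
  rw [hc, mem_ideal_span_X_image] at hw
  obtain ⟨i, hi, hne⟩ := hw w (by simp [support_monomial])
  simp [w, hi] at hne
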